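/- Call ζ : 𝔸 → ℂ an elementary adelic Lizorkin test function if ζ(x) = ζ_∞(x_∞) · ∏_p ζ_p(x_p), where ζ_∞ is a Schwartz function on ℝ with ∫_ℝ t^n ζ_∞(t) dt = 0 for every integer n ≥ 0, each ζ_p : ℚ_p → ℂ is locally constant with compact support, there is a prime P such that ζ_p = 1_{ℤ_p} for all p > P, and ∫_{ℚ_p} ζ_p dμ_p = 0 for all p ≤ P. Then every finite linear combination ζ of elementary adelic Lizorkin test functions can be written as a finite sum ζ(x) = Σ_{i=1}^N c_i(x_∞) · W_i(x'), where x' = (x_p)_p is the finite-adele component of x, each c_i is a Schwartz function on ℝ all of whose moments ∫ t^n c_i(t) dt vanish, and each W_i is a wavelet function of the form x' ↦ ∏_{q∈S_i} ψ^{(0)}_{k_q; j_q a_q}(x_q) · ∏_{q∉S_i} 1_{ℤ_q}(x_q) with S_i a finite set of primes, k_q ∈ {1,…,q−1}, j_q ∈ ℤ, a_q ∈ I_q. -/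

import Mathlib

open MeasureTheory Complex
open scoped Classical

noncomputable section

variable (p : ℕ) [Fact p.Prime]

instance : MeasurableSpace ℚ_[p] := borel _
instance : BorelSpace ℚ_[p] := ⟨rfl⟩

instance (q : Nat.Primes) : Fact (q : ℕ).Prime := ⟨q.2⟩

/-- The indicator function of `ℤ_p` inside `ℚ_p`. -/
def indZ (x : ℚ_[p]) : ℂ := if ‖x‖ ≤ 1 then 1 else 0

/-- The fractional part of a `p`-adic number: the unique rational `r ∈ ℤ[1/p] ∩ [0,1)`
with `x - r ∈ ℤ_p`. -/
def padicFract (x : ℚ_[p]) : ℚ :=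
  if h : ∃ r : ℚ, (0 ≤ r ∧ r < 1 ∧ ∃ (m : ℤ) (n : ℕ), r = m / p ^ n) ∧ ‖x - (r : ℚ_[p])‖ ≤ 1
  then h.choose else 0

/-- The standard additive character `χ_p` of `ℚ_p`. -/
def padicChar (x : ℚ_[p]) : ℂ := Complex.exp (2 * Real.pi * Complex.I * (padicFract p x : ℂ))

/-- The Kozyrev wavelet `ψ⁰_{k;ja}`. -/
def kozyrev (k : ℕ) (j : ℤ) (a : ℚ_[p]) (x : ℚ_[p]) : ℂ :=
  ((p : ℝ) ^ ((j : ℝ) / 2) : ℝ) *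
    padicChar p ((k : ℚ_[p]) / (p : ℚ_[p]) * ((p : ℚ_[p]) ^ (-j) * x - a)) *
    indZ p ((p : ℚ_[p]) ^ (-j) * x - a)

/-- The set `I_p = ℤ[1/p] ∩ [0,1)` of shifts, viewed inside `ℚ_p`. -/
def Ip : Set ℚ_[p] := {a | ∃ (m n : ℕ), m < p ^ n ∧ a = (m : ℚ_[p]) / (p : ℚ_[p]) ^ n}


/-- The adele ring of `ℚ`, as the restricted product of `ℝ` and of the fields `ℚ_p`
with respect to the subrings `ℤ_p`. -/
def Adele : Type :=
  {x : ℝ × (∀ q : Nat.Primes, ℚ_[(q : ℕ)]) //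
    ∀ᶠ q : Nat.Primes in Filter.cofinite, ‖x.2 q‖ ≤ 1}

/-- Wavelet functions on the finite-adele component:
`x' ↦ ∏_{q ∈ S} ψ⁰_{k_q;j_q a_q}(x_q) ∏_{q ∉ S} 1_{ℤ_q}(x_q)`, for `S` a finite set of
primes, `k_q ∈ {1,…,q-1}`, `j_q ∈ ℤ`, `a_q ∈ I_q`. -/
def waveletProdSet : Set ((∀ q : Nat.Primes, ℚ_[(q : ℕ)]) → ℂ) :=
  {f | ∃ c : ∀ q : Nat.Primes,
        Option ({k : ℕ // 1 ≤ k ∧ k ≤ (q : ℕ) - 1} × ℤ × (Ip q)),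
      {q : Nat.Primes | c q ≠ none}.Finite ∧
      f = fun y => ∏' q : Nat.Primes,
        (c q).elim (indZ q (y q)) (fun t => kozyrev q t.1 t.2.1 t.2.2 (y q))}

/-- The set of elementary adelic Lizorkin test functions on `𝔸`:  products
`ζ_∞(x_∞) ∏_q ζ_q(x_q)` where `ζ_∞` is a Schwartz function with all moments vanishing,
every `ζ_q` is locally constant with compact support, `ζ_q = 1_{ℤ_q}` for all primes
`q > P`, and `∫ ζ_q dμ_q = 0` for all primes `q ≤ P`. -/
def elementaryAdelicLizorkinSet
    (μp : ∀ q : Nat.Primes, MeasureTheory.Measure ℚ_[(q : ℕ)]) : Set (Adele → ℂ) :=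
  {f | ∃ (ζR : SchwartzMap ℝ ℂ) (ζ : ∀ q : Nat.Primes, ℚ_[(q : ℕ)] → ℂ),
    (∀ n : ℕ, ∫ t : ℝ, (t : ℂ) ^ n * ζR t = 0) ∧
    (∀ q, IsLocallyConstant (ζ q)) ∧ (∀ q, HasCompactSupport (ζ q)) ∧
    (∃ P : Nat.Primes,
      (∀ q : Nat.Primes, (P : ℕ) < (q : ℕ) → ζ q = fun x => indZ q x) ∧
      (∀ q : Nat.Primes, (q : ℕ) ≤ (P : ℕ) → ∫ x, ζ q x ∂(μp q) = 0)) ∧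
    f = fun x : Adele => ζR x.1.1 * ∏' q : Nat.Primes, ζ q (x.1.2 q)}

/-!
Expanding the indicator function of a residue class of `ℤ/p` into characters shows that the
indicator of a ball in `ℚ_p` of radius `p⁻ʲ⁻¹` differs from `p⁻¹` times the indicator of the
surrounding ball of radius `p⁻ʲ` by a linear combination of Kozyrev wavelets. A locally constant
function `f` of compact support is a combination `∑ f(b) 1_{B(b)}` of indicators of balls of one
small radius; enlarging all of these balls until they agree with one ball `B` around `0` gives
`f ≡ p⁻ᴺ (∑ f(b)) 1_B` modulo wavelets, and `∑ f(b) = 0` when `f` has integral zero. So every local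
factor at `q ≤ P` is a combination of wavelets, and expanding the finite product of these factors
decomposes the adelic test function.
-/

section SpanOfProducts

open scoped Pointwise

lemma prod_mem_span_prod {R A ι : Type*} [CommSemiring R] [CommSemiring A] [Algebra R A]
    {s : Finset ι} {M : ι → Set A} {f : ι → A} (h : ∀ i ∈ s, f i ∈ Submodule.span R (M i)) :
    ∏ i ∈ s, f i ∈ Submodule.span R (∏ i ∈ s, M i) := by
  induction s using Finset.induction_on with
  | empty => exact Submodule.subset_span rfl
  | insert i s hi ih =>
    rw [Finset.prod_insert hi, Finset.prod_insert hi, ← Submodule.span_mul_span]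
    exact Submodule.mul_mem_mul (h i (Finset.mem_insert_self i s))
      (ih fun j hj => h j (Finset.mem_insert_of_mem hj))

end SpanOfProducts

section UltrametricStepFunctions

lemma exists_pos_forall_dist_lt_eq {X Y : Type*} [PseudoMetricSpace X] [Zero Y] {f : X → Y}
    (hf : IsLocallyConstant f) (hc : HasCompactSupport f) :
    ∃ δ > 0, ∀ x y, dist x y < δ → f x = f y := by
  let : UniformSpace Y := ⊥
  have h := uniformContinuous_def.1 (hc.uniformContinuous_of_continuous hf.continuous)
    (SetRel.id : SetRel Y Y) (Filter.mem_principal_self _)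
  obtain ⟨δ, hδ, hδf⟩ := Metric.mem_uniformity_dist.1 h
  exact ⟨δ, hδ, fun x y hxy => hδf hxy⟩

lemma exists_eq_sum_indicator_closedBall {X M : Type*} [PseudoMetricSpace X]
    [IsUltrametricDist X] [AddCommMonoid M] {f : X → M} (hc : HasCompactSupport f) {r : ℝ}
    (hr : 0 < r) (hf : ∀ x y, dist x y ≤ r → f x = f y) :
    ∃ T : Finset X, f = ∑ b ∈ T, (Metric.closedBall b r).indicator fun _ => f b := by
  obtain ⟨t, -, ht_fin, ht_cover⟩ := hc.isCompact.finite_cover_balls hr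
  obtain ⟨T, -, hT_inj, hT_image⟩ := Finset.exists_subset_injOn_image_eq_of_surjOn t
    (ht_fin.toFinset.image fun b => Metric.closedBall b r) (by
      simpa using Set.surjOn_image (fun b => Metric.closedBall b r) t)
  refine ⟨T, funext fun x => ?_⟩
  rw [Finset.sum_apply]
  by_cases hx : ∃ b ∈ T, x ∈ Metric.closedBall b r
  · obtain ⟨b, hb, hxb⟩ := hx
    rw [Finset.sum_eq_single_of_mem b hb, Set.indicator_of_mem hxb]
    · exact hf x b hxb
    · refine fun b' hb' hne => Set.indicator_of_notMem (fun hxb' => hne ?_) _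
      exact hT_inj hb' hb ((IsUltrametricDist.closedBall_eq_of_mem hxb').trans
        (IsUltrametricDist.closedBall_eq_of_mem hxb).symm)
  · push Not at hx
    rw [Finset.sum_eq_zero fun b hb => Set.indicator_of_notMem (hx b hb) _]
    by_contra hfx
    obtain ⟨b, hb, hxb⟩ := Set.mem_iUnion₂.1 (ht_cover (subset_tsupport f hfx))
    have h_mem := Finset.mem_image_of_mem (fun b => Metric.closedBall b r)
      (ht_fin.mem_toFinset.2 hb)
    obtain ⟨b', hb', h_eq⟩ := Finset.mem_image.1 (hT_image ▸ h_mem)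
    exact hx b' hb' (h_eq ▸ Metric.ball_subset_closedBall hxb)

lemma integral_sum_indicator_closedBall {E F : Type*} [NormedAddCommGroup E] [ProperSpace E]
    [MeasurableSpace E] [BorelSpace E] [NormedAddCommGroup F] [NormedSpace ℝ F] [CompleteSpace F]
    (μ : Measure E) [μ.IsAddHaarMeasure] (T : Finset E) (c : E → F) (r : ℝ) :
    ∫ x, (∑ b ∈ T, (Metric.closedBall b r).indicator fun _ => c b) x ∂μ =
      μ.real (Metric.closedBall 0 r) • ∑ b ∈ T, c b := by
  simp only [Finset.sum_apply]
  rw [integral_finsetSum, Finset.smul_sum]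
  · refine Finset.sum_congr rfl fun b _ => ?_
    rw [integral_indicator_const _ Metric.isClosed_closedBall.measurableSet,
      Measure.addHaar_real_closedBall_center]
  · exact fun b _ => (integrable_indicator_iff Metric.isClosed_closedBall.measurableSet).2
      (integrableOn_const (isCompact_closedBall b r).measure_ne_top)

end UltrametricStepFunctions

section PadicCharacter

variable {p}

/-- `r` is the fractional part of `x`: it lies in `ℤ[1/p] ∩ [0, 1)` and `x - r ∈ ℤ_p`. -/
def IsPadicFract (x : ℚ_[p]) (r : ℚ) : Prop :=
  (0 ≤ r ∧ r < 1 ∧ ∃ (m : ℤ) (n : ℕ), r = m / p ^ n) ∧ ‖x - (r : ℚ_[p])‖ ≤ 1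

lemma norm_intCast_div_pow_le_one_iff (m : ℤ) (n : ℕ) :
    ‖(m : ℚ_[p]) / (p : ℚ_[p]) ^ n‖ ≤ 1 ↔ ((p : ℤ) ^ n) ∣ m := by
  have hp : 0 < p := (Fact.out : p.Prime).pos
  rw [← Padic.norm_int_le_pow_iff_dvd, norm_div, Padic.norm_p_pow, div_le_one (by positivity)]

lemma exists_intCast_eq_of_norm_le_one {m : ℤ} {n : ℕ}
    (h : ‖(m : ℚ_[p]) / (p : ℚ_[p]) ^ n‖ ≤ 1) : ∃ t : ℤ, (m : ℚ) / (p : ℚ) ^ n = t := by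
  have hp : (p : ℚ) ≠ 0 := mod_cast (Fact.out : p.Prime).ne_zero
  obtain ⟨t, rfl⟩ := (norm_intCast_div_pow_le_one_iff m n).1 h
  exact ⟨t, by push_cast; field_simp⟩

lemma IsPadicFract.unique {x : ℚ_[p]} {r s : ℚ} (hr : IsPadicFract x r)
    (hs : IsPadicFract x s) : r = s := by
  have hp : (p : ℚ) ≠ 0 := mod_cast (Fact.out : p.Prime).ne_zero
  obtain ⟨⟨hr₀, hr₁, m, n, hr_eq⟩, hxr⟩ := hr
  obtain ⟨⟨hs₀, hs₁, k, l, hs_eq⟩, hxs⟩ := hs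
  have h_eq : r - s = ((m * p ^ l - k * p ^ n : ℤ) : ℚ) / p ^ (n + l) := by
    rw [hr_eq, hs_eq]
    push_cast
    rw [pow_add]
    field_simp
  have h_norm : ‖((r - s : ℚ) : ℚ_[p])‖ ≤ 1 := by
    have h := dist_triangle_max (r : ℚ_[p]) x s
    rw [dist_comm (r : ℚ_[p]) x, dist_eq_norm, dist_eq_norm, dist_eq_norm, ← Rat.cast_sub] at h
    exact h.trans (max_le hxr hxs)
  obtain ⟨t, ht⟩ : ∃ t : ℤ, r - s = t := by
    rw [h_eq] at h_norm ⊢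
    exact exists_intCast_eq_of_norm_le_one (by exact_mod_cast h_norm)
  have ht₀ : t = 0 := by
    have : |(t : ℚ)| < 1 := by rw [← ht, abs_lt]; constructor <;> linarith
    exact Int.abs_lt_one_iff.1 (by exact_mod_cast this)
  rwa [ht₀, Int.cast_zero, sub_eq_zero] at ht

lemma IsPadicFract.padicFract_eq {x : ℚ_[p]} {r : ℚ} (hr : IsPadicFract x r) :
    padicFract p x = r := by
  have h : ∃ r, IsPadicFract x r := ⟨r, hr⟩
  exact (dif_pos h).trans (h.choose_spec.unique hr)

lemma isPadicFract_div (u : ℤ_[p]) :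
    IsPadicFract ((u : ℚ_[p]) / (p : ℚ_[p])) ((PadicInt.toZMod u).val / (p : ℚ)) := by
  have hp : (0 : ℚ) < p := mod_cast (Fact.out : p.Prime).pos
  have hp₀ : (p : ℚ_[p]) ≠ 0 := mod_cast (Fact.out : p.Prime).ne_zero
  refine ⟨⟨by positivity, ?_, ((PadicInt.toZMod u).val : ℤ), 1, by simp⟩, ?_⟩
  · rw [div_lt_one hp]
    exact_mod_cast ZMod.val_lt _
  · obtain ⟨w, hw⟩ := (PadicInt.norm_lt_one_iff_dvd _).1 (PadicInt.norm_sub_zmodRepr_lt_one u)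
    have hu : (u : ℚ_[p]) - u.zmodRepr = p * w := by
      simpa using congrArg ((↑) : ℤ_[p] → ℚ_[p]) hw
    rw [PadicInt.val_toZMod_eq_zmodRepr]
    push_cast
    rw [← sub_div, hu, mul_div_cancel_left₀ _ hp₀]
    exact w.2

lemma padicChar_div (u : ℤ_[p]) :
    padicChar p ((u : ℚ_[p]) / (p : ℚ_[p])) = ZMod.stdAddChar (PadicInt.toZMod u) := by
  rw [padicChar, (isPadicFract_div u).padicFract_eq, ZMod.stdAddChar_apply, ZMod.toCircle_apply]
  push_cast
  ring_nf

lemma exists_mem_Ip_add (x : ℚ_[p]) : ∃ a ∈ Ip p, ∃ v : ℤ_[p], x = a + v := by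
  have hp : (p : ℚ_[p]) ≠ 0 := mod_cast (Fact.out : p.Prime).ne_zero
  have hp₁ : (1 : ℝ) < p := mod_cast (Fact.out : p.Prime).one_lt
  obtain ⟨n, hn⟩ := pow_unbounded_of_one_lt ‖x‖ hp₁
  have hx : ‖(p : ℚ_[p]) ^ n * x‖ ≤ 1 := by
    rw [norm_mul, Padic.norm_p_pow, zpow_neg, zpow_natCast, inv_mul_le_one₀ (by positivity)]
    exact hn.le
  obtain ⟨u, hu⟩ : ∃ u : ℤ_[p], (u : ℚ_[p]) = (p : ℚ_[p]) ^ n * x := ⟨⟨_, hx⟩, rfl⟩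
  obtain ⟨w, hw⟩ := Ideal.mem_span_singleton.1 (PadicInt.appr_spec n u)
  have hw' : (u : ℚ_[p]) - (u.appr n : ℕ) = (p : ℚ_[p]) ^ n * w := by
    simpa using congrArg ((↑) : ℤ_[p] → ℚ_[p]) hw
  refine ⟨(u.appr n : ℕ) / (p : ℚ_[p]) ^ n, ⟨_, n, u.appr_lt n, rfl⟩, w, ?_⟩
  field_simp
  linear_combination hw' - hu

end PadicCharacter

section KozyrevWavelets

variable {p}

variable (p) in
/-- The indicator function of the ball `b + p^j ℤ_p`. -/
def ballIndicator (j : ℤ) (b : ℚ_[p]) : ℚ_[p] → ℂ :=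
  (Metric.closedBall b ((p : ℝ) ^ (-j))).indicator 1

lemma mem_closedBall_zpow_iff {j : ℤ} {c x : ℚ_[p]} :
    x ∈ Metric.closedBall ((p : ℚ_[p]) ^ j * c) ((p : ℝ) ^ (-j)) ↔
      ‖(p : ℚ_[p]) ^ (-j) * x - c‖ ≤ 1 := by
  have hp : (0 : ℝ) < p := mod_cast (Fact.out : p.Prime).pos
  have hp₀ : (p : ℚ_[p]) ≠ 0 := mod_cast (Fact.out : p.Prime).ne_zero
  have h : (p : ℚ_[p]) ^ (-j) * x - c = (x - (p : ℚ_[p]) ^ j * c) / (p : ℚ_[p]) ^ j := by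
    rw [zpow_neg]; field_simp
  rw [mem_closedBall_iff_norm, h, norm_div, Padic.norm_p_zpow, div_le_one (by positivity)]

lemma exists_eq_zpow_mul_add_of_mem_closedBall {j : ℤ} {a x : ℚ_[p]}
    (hx : x ∈ Metric.closedBall ((p : ℚ_[p]) ^ j * a) ((p : ℝ) ^ (-j))) :
    ∃ u : ℤ_[p], x = (p : ℚ_[p]) ^ j * (a + u) := by
  have hp : (p : ℚ_[p]) ≠ 0 := mod_cast (Fact.out : p.Prime).ne_zero
  refine ⟨⟨_, mem_closedBall_zpow_iff.1 hx⟩, ?_⟩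
  rw [add_sub_cancel, zpow_neg, mul_inv_cancel_left₀ (zpow_ne_zero j hp)]

lemma zpow_mul_add_mem_closedBall (j : ℤ) (a : ℚ_[p]) (u : ℤ_[p]) :
    (p : ℚ_[p]) ^ j * (a + u) ∈ Metric.closedBall ((p : ℚ_[p]) ^ j * a) ((p : ℝ) ^ (-j)) := by
  have hp : (p : ℚ_[p]) ≠ 0 := mod_cast (Fact.out : p.Prime).ne_zero
  rw [mem_closedBall_zpow_iff, zpow_neg, inv_mul_cancel_left₀ (zpow_ne_zero j hp),
    add_sub_cancel_left]
  exact u.2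

lemma zpow_mul_add_mem_closedBall_succ_iff (j : ℤ) (a : ℚ_[p]) (u v : ℤ_[p]) :
    (p : ℚ_[p]) ^ j * (a + u) ∈
        Metric.closedBall ((p : ℚ_[p]) ^ j * (a + v)) ((p : ℝ) ^ (-(j + 1))) ↔
      PadicInt.toZMod u = PadicInt.toZMod v := by
  have hp : (0 : ℝ) < p := mod_cast (Fact.out : p.Prime).pos
  have h_norm : ‖(u : ℚ_[p]) - v‖ < 1 ↔ PadicInt.toZMod u = PadicInt.toZMod v := by
    rw [← sub_eq_zero, ← map_sub, ← RingHom.mem_ker, PadicInt.ker_toZMod,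
      IsLocalRing.mem_maximalIdeal, PadicInt.mem_nonunits, PadicInt.norm_def, PadicInt.coe_sub]
  rw [mem_closedBall_iff_norm, ← mul_sub, add_sub_add_left_eq_sub,
    Padic.norm_le_pow_iff_norm_lt_pow_add_one, neg_add, neg_add_cancel_right, norm_mul,
    Padic.norm_p_zpow, mul_lt_iff_lt_one_right (by positivity), h_norm]

lemma kozyrev_eq_zero_of_notMem {j : ℤ} {a x : ℚ_[p]} (k : ℕ)
    (hx : x ∉ Metric.closedBall ((p : ℚ_[p]) ^ j * a) ((p : ℝ) ^ (-j))) :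
    kozyrev p k j a x = 0 := by
  rw [mem_closedBall_zpow_iff] at hx
  rw [kozyrev, indZ, if_neg hx, mul_zero]

lemma kozyrev_zpow_mul_add (k : ℕ) (j : ℤ) (a : ℚ_[p]) (u : ℤ_[p]) :
    kozyrev p k j a ((p : ℚ_[p]) ^ j * (a + u)) =
      ((p : ℝ) ^ ((j : ℝ) / 2) : ℝ) * ZMod.stdAddChar ((k : ZMod p) * PadicInt.toZMod u) := by
  have hp : (p : ℚ_[p]) ≠ 0 := mod_cast (Fact.out : p.Prime).ne_zero
  have hu : (p : ℚ_[p]) ^ (-j) * ((p : ℚ_[p]) ^ j * (a + u)) - a = u := by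
    rw [zpow_neg, inv_mul_cancel_left₀ (zpow_ne_zero j hp), add_sub_cancel_left]
  have hku : (k : ℚ_[p]) / p * u = ((k * u : ℤ_[p]) : ℚ_[p]) / (p : ℚ_[p]) := by
    push_cast; ring
  rw [kozyrev, hu, hku, padicChar_div, indZ, if_pos u.2, mul_one, map_mul, map_natCast]

lemma kozyrev_zero (j : ℤ) (a : ℚ_[p]) :
    kozyrev p 0 j a =
      (((p : ℝ) ^ ((j : ℝ) / 2) : ℝ) : ℂ) • ballIndicator p j ((p : ℚ_[p]) ^ j * a) := by
  funext x
  rw [Pi.smul_apply, ballIndicator, smul_eq_mul]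
  by_cases hx : x ∈ Metric.closedBall ((p : ℚ_[p]) ^ j * a) ((p : ℝ) ^ (-j))
  · rw [Set.indicator_of_mem hx]
    obtain ⟨u, rfl⟩ := exists_eq_zpow_mul_add_of_mem_closedBall hx
    rw [kozyrev_zpow_mul_add, Nat.cast_zero, zero_mul, AddChar.map_zero_eq_one, Pi.one_apply]
  · rw [Set.indicator_of_notMem hx, kozyrev_eq_zero_of_notMem 0 hx, mul_zero]

lemma ballIndicator_succ_zpow_mul_add (j : ℤ) (a : ℚ_[p]) (u v : ℤ_[p]) :
    ballIndicator p (j + 1) ((p : ℚ_[p]) ^ j * (a + v)) ((p : ℚ_[p]) ^ j * (a + u)) =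
      if PadicInt.toZMod u = PadicInt.toZMod v then 1 else 0 := by
  simp only [ballIndicator, Set.indicator_apply, zpow_mul_add_mem_closedBall_succ_iff,
    Pi.one_apply]

lemma closedBall_succ_subset (j : ℤ) (a : ℚ_[p]) (v : ℤ_[p]) :
    Metric.closedBall ((p : ℚ_[p]) ^ j * (a + v)) ((p : ℝ) ^ (-(j + 1))) ⊆
      Metric.closedBall ((p : ℚ_[p]) ^ j * a) ((p : ℝ) ^ (-j)) := by
  have hp : (1 : ℝ) ≤ p := mod_cast (Fact.out : p.Prime).one_le
  rw [IsUltrametricDist.closedBall_eq_of_mem (zpow_mul_add_mem_closedBall j a v)]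
  exact Metric.closedBall_subset_closedBall (zpow_le_zpow_right₀ hp (by lia))

/-- Fourier inversion on `ℤ/p`: up to a constant, the wavelets `ψ⁰_{k;ja}` restrict to the
characters of `p^j ℤ_p / p^(j+1) ℤ_p` on the ball `p^j (a + ℤ_p)`. -/
lemma sum_stdAddChar_smul_kozyrev (j : ℤ) (a : ℚ_[p]) (v : ℤ_[p]) :
    ∑ k : ZMod p, ZMod.stdAddChar (-(k * PadicInt.toZMod v)) • kozyrev p k.val j a =
      (((p : ℝ) ^ ((j : ℝ) / 2) : ℝ) * p : ℂ) •
        ballIndicator p (j + 1) ((p : ℚ_[p]) ^ j * (a + v)) := by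
  funext x
  simp only [Finset.sum_apply, Pi.smul_apply, smul_eq_mul]
  by_cases hx : x ∈ Metric.closedBall ((p : ℚ_[p]) ^ j * a) ((p : ℝ) ^ (-j))
  · obtain ⟨u, rfl⟩ := exists_eq_zpow_mul_add_of_mem_closedBall hx
    simp only [kozyrev_zpow_mul_add, ballIndicator_succ_zpow_mul_add, ZMod.natCast_zmod_val]
    calc ∑ k : ZMod p, ZMod.stdAddChar (-(k * PadicInt.toZMod v)) *
          ((((p : ℝ) ^ ((j : ℝ) / 2) : ℝ) : ℂ) * ZMod.stdAddChar (k * PadicInt.toZMod u))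
        = ((p : ℝ) ^ ((j : ℝ) / 2) : ℝ) * ∑ k : ZMod p,
            ZMod.stdAddChar (k * (PadicInt.toZMod u - PadicInt.toZMod v)) := by
          rw [Finset.mul_sum]
          refine Finset.sum_congr rfl fun k _ => ?_
          rw [mul_left_comm, ← AddChar.map_add_eq_mul, neg_add_eq_sub, mul_sub]
      _ = _ := by
          rw [AddChar.sum_mulShift _ (ZMod.isPrimitive_stdAddChar p), ZMod.card, mul_assoc]
          simp only [sub_eq_zero, Nat.cast_ite, Nat.cast_zero, mul_ite, mul_one, mul_zero]
  · rw [ballIndicator, Set.indicator_of_notMem fun h => hx (closedBall_succ_subset j a v h),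
      mul_zero]
    exact Finset.sum_eq_zero fun k _ => by rw [kozyrev_eq_zero_of_notMem _ hx, mul_zero]

variable (p) in
/-- The set of all Kozyrev wavelets `ψ⁰_{k;ja}` on `ℚ_p`, with `1 ≤ k ≤ p - 1`, `j ∈ ℤ` and
`a ∈ I_p`; the indexing type is the one used in `waveletProdSet`. -/
def kozyrevSet : Set (ℚ_[p] → ℂ) :=
  Set.range fun t : {k : ℕ // 1 ≤ k ∧ k ≤ p - 1} × ℤ × Ip p => kozyrev p t.1 t.2.1 t.2.2

lemma kozyrev_val_mem_kozyrevSet {k : ZMod p} (hk : k ≠ 0) (j : ℤ) {a : ℚ_[p]} (ha : a ∈ Ip p) :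
    kozyrev p k.val j a ∈ kozyrevSet p :=
  ⟨(⟨k.val, Nat.one_le_iff_ne_zero.2 ((ZMod.val_ne_zero k).2 hk),
    Nat.le_sub_one_of_lt k.val_lt⟩, j, ⟨a, ha⟩), rfl⟩

lemma ballIndicator_succ_sModEq (j : ℤ) (b : ℚ_[p]) :
    ballIndicator p (j + 1) b ≡ (p : ℂ)⁻¹ • ballIndicator p j b
      [SMOD Submodule.span ℂ (kozyrevSet p)] := by
  have hp : (0 : ℝ) < p := mod_cast (Fact.out : p.Prime).pos
  have hp₀ : (p : ℚ_[p]) ≠ 0 := mod_cast (Fact.out : p.Prime).ne_zero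
  obtain ⟨a, ha, v, hv⟩ := exists_mem_Ip_add ((p : ℚ_[p]) ^ (-j) * b)
  obtain rfl : b = (p : ℚ_[p]) ^ j * (a + v) := by
    rw [← hv, zpow_neg, mul_inv_cancel_left₀ (zpow_ne_zero j hp₀)]
  set c : ℂ := (((p : ℝ) ^ ((j : ℝ) / 2) : ℝ) : ℂ)
  have hc₀ : c ≠ 0 := Complex.ofReal_ne_zero.2 (Real.rpow_pos_of_pos hp _).ne'
  have hp_ne : (p : ℂ) ≠ 0 := mod_cast (Fact.out : p.Prime).ne_zero
  have h_parent : kozyrev p 0 j a = c • ballIndicator p j ((p : ℚ_[p]) ^ j * (a + v)) := by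
    rw [kozyrev_zero, ballIndicator, ballIndicator,
      IsUltrametricDist.closedBall_eq_of_mem (zpow_mul_add_mem_closedBall j a v)]
  have h_sum := sum_stdAddChar_smul_kozyrev j a v
  rw [← Finset.add_sum_erase _ _ (Finset.mem_univ 0), zero_mul, neg_zero,
    AddChar.map_zero_eq_one, one_smul, ZMod.val_zero, h_parent] at h_sum
  have h_diff : ballIndicator p (j + 1) ((p : ℚ_[p]) ^ j * (a + v)) -
      (p : ℂ)⁻¹ • ballIndicator p j ((p : ℚ_[p]) ^ j * (a + v)) = (c * p)⁻¹ •
        ∑ k ∈ Finset.univ.erase (0 : ZMod p),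
          ZMod.stdAddChar (-(k * PadicInt.toZMod v)) • kozyrev p k.val j a := by
    rw [eq_inv_smul_iff₀ (mul_ne_zero hc₀ hp_ne), smul_sub, ← h_sum, smul_smul,
      mul_inv_cancel_right₀ hp_ne, add_sub_cancel_left]
  rw [SModEq.sub_mem, h_diff]
  refine Submodule.smul_mem _ _ (Submodule.sum_mem _ fun k hk => Submodule.smul_mem _ _ ?_)
  exact Submodule.subset_span (kozyrev_val_mem_kozyrevSet (Finset.ne_of_mem_erase hk) j ha)

lemma ballIndicator_add_sModEq (j : ℤ) (n : ℕ) (b : ℚ_[p]) :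
    ballIndicator p (j + n) b ≡ (p : ℂ)⁻¹ ^ n • ballIndicator p j b
      [SMOD Submodule.span ℂ (kozyrevSet p)] := by
  induction n with
  | zero => simp
  | succ n ih =>
    have h := (ballIndicator_succ_sModEq (j + n) b).trans (ih.smul (p : ℂ)⁻¹)
    rwa [smul_smul, ← pow_succ', add_assoc, ← Nat.cast_succ] at h

end KozyrevWavelets

section LocalDecomposition

variable {p}

lemma exists_forall_ballIndicator_neg_eq (T : Finset ℚ_[p]) :
    ∃ m : ℕ, ∀ b ∈ T, ballIndicator p (-m) b = ballIndicator p (-m) 0 := by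
  have hp : (1 : ℝ) < p := mod_cast (Fact.out : p.Prime).one_lt
  obtain ⟨R, hR⟩ := T.finite_toSet.isBounded.exists_norm_le
  obtain ⟨m, hm⟩ := pow_unbounded_of_one_lt R hp
  refine ⟨m, fun b hb => ?_⟩
  have hb₀ : b ∈ Metric.closedBall (0 : ℚ_[p]) ((p : ℝ) ^ (-(-m : ℤ))) := by
    rw [mem_closedBall_zero_iff, neg_neg, zpow_natCast]
    exact (hR b hb).trans hm.le
  rw [ballIndicator, ballIndicator, IsUltrametricDist.closedBall_eq_of_mem hb₀]

lemma smul_ballIndicator (j : ℤ) (b : ℚ_[p]) (c : ℂ) :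
    c • ballIndicator p j b = (Metric.closedBall b ((p : ℝ) ^ (-j))).indicator fun _ => c := by
  funext x
  simp only [ballIndicator, Pi.smul_apply, Set.indicator_apply, Pi.one_apply, smul_eq_mul,
    mul_ite, mul_one, mul_zero]

lemma exists_eq_sum_smul_ballIndicator {f : ℚ_[p] → ℂ} (hf : IsLocallyConstant f)
    (hc : HasCompactSupport f) :
    ∃ (n : ℕ) (T : Finset ℚ_[p]), f = ∑ b ∈ T, f b • ballIndicator p n b := by
  have hp : (1 : ℝ) < p := mod_cast (Fact.out : p.Prime).one_lt
  obtain ⟨δ, hδ, hfδ⟩ := exists_pos_forall_dist_lt_eq hf hc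
  obtain ⟨n, hn⟩ := exists_pow_lt_of_lt_one hδ (inv_lt_one_of_one_lt₀ hp)
  rw [inv_pow, ← zpow_natCast, ← zpow_neg] at hn
  obtain ⟨T, hT⟩ := exists_eq_sum_indicator_closedBall hc (by positivity : 0 < (p : ℝ) ^ (-n : ℤ))
    fun x y hxy => hfδ x y (hxy.trans_lt hn)
  refine ⟨n, T, ?_⟩
  simp only [smul_ballIndicator]
  exact hT

lemma integral_sum_smul_ballIndicator_eq_zero_iff (μ : Measure ℚ_[p]) [μ.IsAddHaarMeasure]
    (j : ℤ) (T : Finset ℚ_[p]) (c : ℚ_[p] → ℂ) :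
    ∫ x, (∑ b ∈ T, c b • ballIndicator p j b) x ∂μ = 0 ↔ ∑ b ∈ T, c b = 0 := by
  have hp : (0 : ℝ) < p := mod_cast (Fact.out : p.Prime).pos
  have hμ : μ.real (Metric.closedBall 0 ((p : ℝ) ^ (-j))) ≠ 0 :=
    (ENNReal.toReal_pos (Metric.measure_closedBall_pos μ _ (by positivity)).ne'
      (isCompact_closedBall _ _).measure_ne_top).ne'
  simp only [smul_ballIndicator]
  rw [integral_sum_indicator_closedBall, smul_eq_zero_iff_right hμ]

theorem mem_span_kozyrevSet_of_integral_eq_zero (μ : Measure ℚ_[p]) [μ.IsAddHaarMeasure]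
    {f : ℚ_[p] → ℂ} (hf : IsLocallyConstant f) (hc : HasCompactSupport f)
    (hi : ∫ x, f x ∂μ = 0) :
    f ∈ Submodule.span ℂ (kozyrevSet p) := by
  obtain ⟨n, T, hT⟩ := exists_eq_sum_smul_ballIndicator hf hc
  have h_sum : ∑ b ∈ T, f b = 0 := by
    rw [hT] at hi
    exact (integral_sum_smul_ballIndicator_eq_zero_iff μ n T f).1 hi
  obtain ⟨m, hm⟩ := exists_forall_ballIndicator_neg_eq T
  have h_coarsen : ∀ b ∈ T, ballIndicator p n b ≡ (p : ℂ)⁻¹ ^ (m + n) • ballIndicator p (-m) 0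
      [SMOD Submodule.span ℂ (kozyrevSet p)] := fun b hb => by
    have h := ballIndicator_add_sModEq (-m) (m + n) b
    rwa [Nat.cast_add, neg_add_cancel_left, hm b hb] at h
  rw [← SModEq.zero]
  calc f = ∑ b ∈ T, f b • ballIndicator p n b := hT
    _ ≡ ∑ b ∈ T, f b • (p : ℂ)⁻¹ ^ (m + n) • ballIndicator p (-m) 0
        [SMOD Submodule.span ℂ (kozyrevSet p)] :=
      SModEq.sum fun b hb => (h_coarsen b hb).smul (f b)
    _ = 0 := by rw [← Finset.sum_smul, h_sum, zero_smul]

end LocalDecomposition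

section AdelicDecomposition

open scoped Pointwise

/-- The indicator function of the adeles that are integral at every prime outside `S`. -/
def integralOutside (S : Finset Nat.Primes) (x : Adele) : ℂ :=
  ∏' q : Nat.Primes, if q ∈ S then 1 else indZ q (x.1.2 q)

lemma tprod_eq_prod_mul_integralOutside {S : Finset Nat.Primes}
    {g : ∀ q : Nat.Primes, ℚ_[(q : ℕ)] → ℂ} (hg : ∀ q ∉ S, g q = indZ q) (x : Adele) :
    ∏' q : Nat.Primes, g q (x.1.2 q) = (∏ q ∈ S, g q (x.1.2 q)) * integralOutside S x := by
  have h_split : ∀ q : Nat.Primes, g q (x.1.2 q) =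
      (if q ∈ S then g q (x.1.2 q) else 1) * (if q ∈ S then 1 else indZ q (x.1.2 q)) := by
    intro q
    split_ifs with hq
    · rw [mul_one]
    · rw [hg q hq, one_mul]
  have h_outside : Multipliable fun q : Nat.Primes => if q ∈ S then 1 else indZ q (x.1.2 q) := by
    refine multipliable_of_hasFiniteMulSupport ((Filter.eventually_cofinite.1 x.2).subset ?_)
    intro q hq hxq
    exact hq (by simp only [indZ, if_pos hxq, ite_self])
  have h_inside : ∀ q ∉ S, (if q ∈ S then g q (x.1.2 q) else 1) = 1 := fun q hq => if_neg hq
  rw [tprod_congr h_split, (multipliable_of_ne_finset_one h_inside).tprod_mul h_outside,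
    tprod_eq_prod h_inside, integralOutside]
  congr 1
  exact Finset.prod_congr rfl fun q hq => if_pos hq

lemma exists_mem_waveletProdSet_eq {S : Finset Nat.Primes}
    {ψ : ∀ q : Nat.Primes, ℚ_[(q : ℕ)] → ℂ} (hψ : ∀ q ∈ S, ψ q ∈ kozyrevSet q) :
    ∃ w ∈ waveletProdSet, ∀ x : Adele,
      (∏ q ∈ S, ψ q (x.1.2 q)) * integralOutside S x = w x.1.2 := by
  choose t ht using hψ
  let c : ∀ q : Nat.Primes, Option ({k : ℕ // 1 ≤ k ∧ k ≤ (q : ℕ) - 1} × ℤ × Ip q) :=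
    fun q => if hq : q ∈ S then some (t q hq) else none
  have hc_some : ∀ q (hq : q ∈ S), c q = some (t q hq) := fun q hq => dif_pos hq
  have hc_none : ∀ q ∉ S, c q = none := fun q hq => dif_neg hq
  refine ⟨_, ⟨c, S.finite_toSet.subset fun q hq => by_contra fun hqS => hq (hc_none q hqS), rfl⟩,
    fun x => ?_⟩
  have h_tprod := tprod_eq_prod_mul_integralOutside (S := S) (g := fun q y =>
    (c q).elim (indZ q y) fun t => kozyrev q t.1 t.2.1 t.2.2 y)
    (fun q hq => by simp only [hc_none q hq, Option.elim_none]) x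
  refine Eq.trans ?_ h_tprod.symm
  congr 1
  refine Finset.prod_congr rfl fun q hq => ?_
  simp only [hc_some q hq, Option.elim_some, ← ht q hq]

/-- All moments of the Schwartz function `c` vanish, i.e. `c` lies in the Lizorkin space of `ℝ`. -/
def HasVanishingMoments (c : SchwartzMap ℝ ℂ) : Prop :=
  ∀ n : ℕ, ∫ t : ℝ, (t : ℂ) ^ n * c t = 0

lemma HasVanishingMoments.const_smul {c : SchwartzMap ℝ ℂ} (hc : HasVanishingMoments c) (a : ℂ) :
    HasVanishingMoments (a • c) := by
  intro n
  simp only [_root_.smul_apply, smul_eq_mul, mul_left_comm _ a]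
  rw [integral_const_mul, hc n, mul_zero]

/-- The terms `c(x_∞) W(x')` of a wavelet decomposition, with `c` a Schwartz function all of whose
moments vanish and `W` a wavelet function on the finite adeles. -/
def waveletTermSet : Set (Adele → ℂ) :=
  {f | ∃ (c : SchwartzMap ℝ ℂ) (w : (∀ q : Nat.Primes, ℚ_[(q : ℕ)]) → ℂ),
    HasVanishingMoments c ∧ w ∈ waveletProdSet ∧ f = fun x => c x.1.1 * w x.1.2}

lemma mul_prod_mul_integralOutside_mem_span {c : SchwartzMap ℝ ℂ} (hc : HasVanishingMoments c)
    {S : Finset Nat.Primes} {f : ∀ q : Nat.Primes, ℚ_[(q : ℕ)] → ℂ}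
    (hf : ∀ q ∈ S, f q ∈ Submodule.span ℂ (kozyrevSet q)) :
    (fun x : Adele => c x.1.1 * ((∏ q ∈ S, f q (x.1.2 q)) * integralOutside S x)) ∈
      Submodule.span ℂ waveletTermSet := by
  let pullback (q : Nat.Primes) : (ℚ_[(q : ℕ)] → ℂ) →ₗ[ℂ] (Adele → ℂ) :=
    LinearMap.funLeft ℂ ℂ fun x => x.1.2 q
  let h : Adele → ℂ := fun x => c x.1.1 * integralOutside S x
  have h_prod : ∏ q ∈ S, pullback q (f q) ∈
      Submodule.span ℂ (∏ q ∈ S, pullback q '' kozyrevSet q) := by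
    refine prod_mem_span_prod fun q hq => ?_
    rw [← Submodule.map_span]
    exact Submodule.mem_map_of_mem (hf q hq)
  have h_mul := Submodule.mem_map_of_mem (f := LinearMap.mulLeft ℂ h) h_prod
  rw [Submodule.map_span] at h_mul
  have h_eq (f : ∀ q : Nat.Primes, ℚ_[(q : ℕ)] → ℂ) :
      (fun x : Adele => c x.1.1 * ((∏ q ∈ S, f q (x.1.2 q)) * integralOutside S x)) =
        LinearMap.mulLeft ℂ h (∏ q ∈ S, pullback q (f q)) := by
    funext x
    simp only [h, pullback, LinearMap.mulLeft_apply, Pi.mul_apply, Finset.prod_apply,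
      LinearMap.funLeft_apply]
    ring
  rw [h_eq]
  refine Submodule.span_mono ?_ h_mul
  rintro _ ⟨_, hg, rfl⟩
  obtain ⟨g, hg_mem, rfl⟩ := (Set.mem_finsetProd _ _ _).1 hg
  choose! ψ hψ hψg using fun q (hq : q ∈ S) => hg_mem hq
  obtain ⟨w, hw, hw_eq⟩ := exists_mem_waveletProdSet_eq hψ
  refine ⟨c, w, hc, hw, ?_⟩
  simp only [← hw_eq]
  rw [h_eq ψ, Finset.prod_congr rfl hψg]

lemma elementaryAdelicLizorkinSet_subset_span
    (μp : ∀ q : Nat.Primes, Measure ℚ_[(q : ℕ)]) [∀ q, (μp q).IsAddHaarMeasure] :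
    elementaryAdelicLizorkinSet μp ⊆ Submodule.span ℂ waveletTermSet := by
  rintro _ ⟨ζR, ζ, hζR, hζ_const, hζ_supp, ⟨P, hζ_gt, hζ_le⟩, rfl⟩
  have h_fin : {q : Nat.Primes | (q : ℕ) ≤ P}.Finite :=
    (Set.finite_Iic (P : ℕ)).preimage Subtype.val_injective.injOn
  have h_mem : ∀ q, q ∈ h_fin.toFinset ↔ (q : ℕ) ≤ P := fun q => h_fin.mem_toFinset
  have h_tprod := fun x => tprod_eq_prod_mul_integralOutside (S := h_fin.toFinset) (g := ζ)
    (fun q hq => hζ_gt q (not_le.1 ((h_mem q).not.1 hq))) x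
  simp only [h_tprod]
  exact mul_prod_mul_integralOutside_mem_span hζR fun q hq =>
    mem_span_kozyrevSet_of_integral_eq_zero (μp q) (hζ_const q) (hζ_supp q)
      (hζ_le q ((h_mem q).1 hq))

end AdelicDecomposition

/-- Every finite linear combination `ζ` of elementary adelic Lizorkin
test functions can be written as a finite sum `ζ(x) = Σ_i c_i(x_∞)·W_i(x')`, where each
`c_i` is a Schwartz function with all moments vanishing and each `W_i` is a wavelet
function on the finite-adele component.  Here `μ_p` is the Haar measure on `ℚ_p` with
`μ_p(ℤ_p) = 1`. -/
theorem adelic_lizorkin_wavelet_decomposition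
    (μp : ∀ q : Nat.Primes, MeasureTheory.Measure ℚ_[(q : ℕ)])
    (hHaar : ∀ q, (μp q).IsAddHaarMeasure)
    (hnorm : ∀ q, μp q {x : ℚ_[(q : ℕ)] | ‖x‖ ≤ 1} = 1)
    (ζ : Adele → ℂ) (hζ : ζ ∈ Submodule.span ℂ (elementaryAdelicLizorkinSet μp)) :
    ∃ (N : ℕ) (c : Fin N → SchwartzMap ℝ ℂ)
      (w : Fin N → (∀ q : Nat.Primes, ℚ_[(q : ℕ)]) → ℂ),
      (∀ i, ∀ n : ℕ, ∫ t : ℝ, (t : ℂ) ^ n * c i t = 0) ∧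
      (∀ i, w i ∈ waveletProdSet) ∧
      ζ = fun x : Adele => ∑ i : Fin N, c i x.1.1 * w i x.1.2 := by
  have hζ_span : ζ ∈ Submodule.span ℂ waveletTermSet :=
    Submodule.span_le.2 (elementaryAdelicLizorkinSet_subset_span μp) hζ
  obtain ⟨N, a, g, rfl⟩ := Submodule.mem_span_set'.1 hζ_span
  choose c w hc hw hcw using fun i => (g i).2
  refine ⟨N, fun i => a i • c i, w, fun i => (hc i).const_smul (a i), hw, funext fun x => ?_⟩
  simp only [Finset.sum_apply, Pi.smul_apply, hcw, _root_.smul_apply, smul_eq_mul, mul_assoc]
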